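/- arXiv:1508.03960 — 4 statements merged into one kernel-verified Lean document; each statement's English description precedes it below -/
import Mathlib

section
/- Let ι be an arbitrary index type and let p, q : ι → ℝ³ be two families of points in Euclidean 3-space such that dist(p i, p j) = dist(q i, q j) for all i, j ∈ ι. Then there exists an isometric equivalence f : ℝ³ ≃ ℝ³ (a distance-preserving bijection of ℝ³ onto itself) with f(p i) = q i for all i ∈ ι. -/
/-!
Once a base point is fixed, polarization recovers the inner products of the position vectors of a
family from its pairwise distances, and these determine the norm of every linear combination of the
position vectors. So sending each position vector of the first family to the corresponding one of
the second is well defined and isometric on the span; in finite dimension it extends to the whole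
space by any isometry between the orthogonal complements.
-/

open Module

theorem exists_linearIsometry_range_of_norm_eq {𝕜 M E F : Type*} [DivisionRing 𝕜]
    [AddCommGroup M] [Module 𝕜 M] [SeminormedAddCommGroup E] [Module 𝕜 E]
    [NormedAddCommGroup F] [Module 𝕜 F] (g : M →ₗ[𝕜] E) (f : M →ₗ[𝕜] F)
    (h : ∀ x, ‖f x‖ = ‖g x‖) :
    ∃ L : g.range →ₗᵢ[𝕜] F, ∀ x, L (g.rangeRestrict x) = f x := by
  have apply_range (x : M) : f.compLeftInverse g (g.rangeRestrict x) = f x :=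
    LinearMap.compLeftInverse_apply_of_bdd f g ⟨1, fun x ↦ by rw [h, one_mul]⟩ x _ rfl
  refine ⟨⟨f.compLeftInverse g, fun y ↦ ?_⟩, apply_range⟩
  obtain ⟨x, rfl⟩ := g.surjective_rangeRestrict y
  exact (congrArg norm (apply_range x)).trans (h x)

section InnerProductSpace

variable {𝕜 ι V W : Type*} [RCLike 𝕜]

theorem norm_linearCombination_eq_of_inner_eq [SeminormedAddCommGroup V] [InnerProductSpace 𝕜 V]
    [SeminormedAddCommGroup W] [InnerProductSpace 𝕜 W] {u : ι → V} {v : ι → W}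
    (h : ∀ i j, inner 𝕜 (u i) (u j) = inner 𝕜 (v i) (v j)) (c : ι →₀ 𝕜) :
    ‖Finsupp.linearCombination 𝕜 u c‖ = ‖Finsupp.linearCombination 𝕜 v c‖ := by
  simp only [norm_eq_sqrt_re_inner (𝕜 := 𝕜), Finsupp.linearCombination_apply, Finsupp.sum_inner,
    Finsupp.inner_sum, inner_smul_left, inner_smul_right, h]

variable [NormedAddCommGroup V] [InnerProductSpace 𝕜 V] [FiniteDimensional 𝕜 V]
  [NormedAddCommGroup W] [InnerProductSpace 𝕜 W] [FiniteDimensional 𝕜 W]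

theorem exists_linearIsometryEquiv_extending (hVW : finrank 𝕜 V = finrank 𝕜 W)
    {S : Submodule 𝕜 V} (L : S →ₗᵢ[𝕜] W) : ∃ f : V ≃ₗᵢ[𝕜] W, ∀ s : S, f s = L s := by
  let e : V ≃ₗᵢ[𝕜] W :=
    (stdOrthonormalBasis 𝕜 V).equiv (stdOrthonormalBasis 𝕜 W) (finCongr hVW)
  let extension : V →ₗᵢ[𝕜] V := (e.symm.toLinearIsometry.comp L).extend
  refine ⟨(extension.toLinearIsometryEquiv rfl).trans e, fun s ↦ ?_⟩
  simp [extension, LinearIsometry.extend_apply]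

theorem exists_linearIsometryEquiv_of_inner_eq (hVW : finrank 𝕜 V = finrank 𝕜 W)
    {u : ι → V} {v : ι → W} (h : ∀ i j, inner 𝕜 (u i) (u j) = inner 𝕜 (v i) (v j)) :
    ∃ f : V ≃ₗᵢ[𝕜] W, ∀ i, f (u i) = v i := by
  obtain ⟨L, hL⟩ := exists_linearIsometry_range_of_norm_eq (Finsupp.linearCombination 𝕜 u)
    (Finsupp.linearCombination 𝕜 v) fun c ↦ (norm_linearCombination_eq_of_inner_eq h c).symm
  obtain ⟨f, hf⟩ := exists_linearIsometryEquiv_extending hVW L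
  refine ⟨f, fun i ↦ ?_⟩
  have hfi := (hf _).trans (hL (Finsupp.single i 1))
  simpa only [LinearMap.codRestrict_apply, Finsupp.linearCombination_single, one_smul] using hfi

theorem exists_affineIsometryEquiv_of_inner_vsub_eq {P Q : Type*} [PseudoMetricSpace P]
    [NormedAddTorsor V P] [PseudoMetricSpace Q] [NormedAddTorsor W Q]
    (hVW : finrank 𝕜 V = finrank 𝕜 W) {p : ι → P} {q : ι → Q} (a : P) (b : Q)
    (h : ∀ i j, inner 𝕜 (p i -ᵥ a) (p j -ᵥ a) = inner 𝕜 (q i -ᵥ b) (q j -ᵥ b)) :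
    ∃ f : P ≃ᵃⁱ[𝕜] Q, ∀ i, f (p i) = q i := by
  obtain ⟨L, hL⟩ := exists_linearIsometryEquiv_of_inner_eq hVW h
  exact ⟨(AffineIsometryEquiv.vaddConst 𝕜 a).symm.trans
    (L.toAffineIsometryEquiv.trans (AffineIsometryEquiv.vaddConst 𝕜 b)), fun i ↦ by simp [hL]⟩

end InnerProductSpace

section Congruent

variable {ι V W P Q : Type*} [PseudoMetricSpace P] [PseudoMetricSpace Q] {p : ι → P} {q : ι → Q}

theorem inner_vsub_vsub_eq_of_congruent [SeminormedAddCommGroup V] [InnerProductSpace ℝ V]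
    [NormedAddTorsor V P] [SeminormedAddCommGroup W] [InnerProductSpace ℝ W] [NormedAddTorsor W Q]
    (h : Congruent p q) (i j k : ι) :
    inner ℝ (p i -ᵥ p k) (p j -ᵥ p k) = inner ℝ (q i -ᵥ q k) (q j -ᵥ q k) := by
  simp only [real_inner_eq_norm_mul_self_add_norm_mul_self_sub_norm_sub_mul_self_div_two,
    vsub_sub_vsub_cancel_right, ← dist_eq_norm_vsub, h.dist_eq]

theorem stmt_3_general [NormedAddCommGroup V] [InnerProductSpace ℝ V] [FiniteDimensional ℝ V]
    [NormedAddTorsor V P] [NormedAddCommGroup W] [InnerProductSpace ℝ W] [FiniteDimensional ℝ W]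
    [NormedAddTorsor W Q] (hVW : finrank ℝ V = finrank ℝ W) (h : Congruent p q) :
    ∃ f : P ≃ᵃⁱ[ℝ] Q, ∀ i, f (p i) = q i := by
  obtain ⟨a, b, hab⟩ : ∃ (a : P) (b : Q), ∀ i j,
      inner ℝ (p i -ᵥ a) (p j -ᵥ a) = inner ℝ (q i -ᵥ b) (q j -ᵥ b) := by
    rcases isEmpty_or_nonempty ι with _ | ⟨⟨k⟩⟩
    · exact ⟨Classical.arbitrary P, Classical.arbitrary Q, isEmptyElim⟩
    · exact ⟨p k, q k, fun i j ↦ inner_vsub_vsub_eq_of_congruent h i j k⟩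
  exact exists_affineIsometryEquiv_of_inner_vsub_eq hVW a b hab

end Congruent

/-- Two families of points of Euclidean 3-space with equal corresponding pairwise
distances are congruent: there is an isometric equivalence of `ℝ³` onto itself
mapping one family onto the other. -/
theorem stmt_3 {ι : Type*} (p q : ι → EuclideanSpace ℝ (Fin 3))
    (h : ∀ i j, dist (p i) (p j) = dist (q i) (q j)) :
    ∃ f : EuclideanSpace ℝ (Fin 3) ≃ᵢ EuclideanSpace ℝ (Fin 3),
      ∀ i, f (p i) = q i := by
  obtain ⟨f, hf⟩ := stmt_3_general rfl (congruent_iff_dist_eq.2 h)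
  exact ⟨f.toIsometryEquiv, hf⟩
end

section
/- Let a, b, c be affinely independent points of ℝ³ with plane Π = affine span of {a, b, c}, and let a', b', c' be affinely independent points with plane Π' = affine span of {a', b', c'}. Let p, q ∈ ℝ³ lie strictly on opposite sides of Π and let p', q' lie strictly on opposite sides of Π'. Assume dist(a,b) = dist(a',b'), dist(b,c) = dist(b',c'), dist(a,c) = dist(a',c'), dist(p,a) = dist(p',a'), dist(p,b) = dist(p',b'), dist(p,c) = dist(p',c'), dist(q,a) = dist(q',a'), dist(q,b) = dist(q',b'), and dist(q,c) = dist(q',c'). Then dist(p,q) = dist(p',q'). -/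
/-!
The segment from `p` to `q` crosses the plane at a point `r`. Transport `r` to the point `r'` with
the same barycentric weights in the second configuration: by Leibniz's formula for the distance to
an affine combination, `r'` is as far from `p'` and `q'` as `r` is from `p` and `q`. Hence
`dist p' q' ≤ dist p' r' + dist r' q' = dist p r + dist r q = dist p q`, and the situation is
symmetric.
-/

open Finset

open scoped Congruent RealInnerProductSpace

section

variable {ι V V' P P' : Type*}
  [SeminormedAddCommGroup V] [InnerProductSpace ℝ V] [PseudoMetricSpace P] [NormedAddTorsor V P]
  [SeminormedAddCommGroup V'] [InnerProductSpace ℝ V'] [PseudoMetricSpace P']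
  {v : ι → P} {v' : ι → P'} {p q : P} {p' q' : P'}

theorem norm_sum_smul_sq_of_sum_eq_one {s : Finset ι} {w : ι → ℝ} (hw : ∑ i ∈ s, w i = 1)
    (u : ι → V) :
    ‖∑ i ∈ s, w i • u i‖ ^ 2 =
      ∑ i ∈ s, w i * ‖u i‖ ^ 2 - (∑ i ∈ s, ∑ j ∈ s, w i * w j * ‖u i - u j‖ ^ 2) / 2 := by
  have polarization (i j : ι) : w i * (w j * ⟪u i, u j⟫) =
      (w j * (w i * ‖u i‖ ^ 2) + w i * (w j * ‖u j‖ ^ 2) - w i * w j * ‖u i - u j‖ ^ 2) / 2 := by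
    rw [norm_sub_sq_real]
    ring
  calc ‖∑ i ∈ s, w i • u i‖ ^ 2
      = ∑ i ∈ s, ∑ j ∈ s, w i * (w j * ⟪u i, u j⟫) := by
        simp_rw [← real_inner_self_eq_norm_sq, sum_inner, inner_sum, real_inner_smul_left,
          real_inner_smul_right]
    _ = _ := by
        simp only [polarization, ← sum_div, sum_sub_distrib, sum_add_distrib, ← mul_sum, ← sum_mul,
          hw]
        ring

theorem dist_affineCombination_sq (p : P) (v : ι → P) {s : Finset ι} {w : ι → ℝ}
    (hw : ∑ i ∈ s, w i = 1) :
    dist p (s.affineCombination ℝ v w) ^ 2 =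
      ∑ i ∈ s, w i * dist p (v i) ^ 2 -
        (∑ i ∈ s, ∑ j ∈ s, w i * w j * dist (v i) (v j) ^ 2) / 2 := by
  simp only [dist_comm p, dist_eq_norm_vsub V,
    ← sum_smul_vsub_const_eq_affineCombination_vsub s w v p hw,
    norm_sum_smul_sq_of_sum_eq_one hw, vsub_sub_vsub_cancel_right]

theorem dist_affineCombination_eq_of_congruent [NormedAddTorsor V' P'] (hv : v ≅ v')
    (hp : ∀ i, dist p (v i) = dist p' (v' i)) {s : Finset ι} {w : ι → ℝ}
    (hw : ∑ i ∈ s, w i = 1) :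
    dist p (s.affineCombination ℝ v w) = dist p' (s.affineCombination ℝ v' w) := by
  rw [← sq_eq_sq₀ dist_nonneg dist_nonneg]
  simp only [dist_affineCombination_sq _ _ hw, hp, hv.dist_eq]

theorem dist_le_dist_of_wOppSide_of_congruent [NormedAddTorsor V' P'] (hv : v ≅ v')
    (hpq : (affineSpan ℝ (Set.range v)).WOppSide p q)
    (hp : ∀ i, dist p (v i) = dist p' (v' i)) (hq : ∀ i, dist q (v i) = dist q' (v' i)) :
    dist p' q' ≤ dist p q := by
  obtain ⟨r, hr, hprq⟩ := AffineSubspace.wOppSide_iff_exists_wbtw.mp hpq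
  obtain ⟨s, w, hw, rfl⟩ := eq_affineCombination_of_mem_affineSpan hr
  set r := s.affineCombination ℝ v w
  set r' := s.affineCombination ℝ v' w
  have hpr : dist p r = dist p' r' := dist_affineCombination_eq_of_congruent hv hp hw
  have hqr : dist q r = dist q' r' := dist_affineCombination_eq_of_congruent hv hq hw
  calc dist p' q'
      ≤ dist p' r' + dist q' r' := dist_triangle_right p' q' r'
    _ = dist p r + dist r q := by rw [hpr, dist_comm r q, hqr]
    _ = dist p q := hprq.dist_add_dist

theorem stmt_7_general [NormedAddTorsor V' P'] (hv : v ≅ v')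
    (hpq : (affineSpan ℝ (Set.range v)).WOppSide p q)
    (hpq' : (affineSpan ℝ (Set.range v')).WOppSide p' q')
    (hp : ∀ i, dist p (v i) = dist p' (v' i)) (hq : ∀ i, dist q (v i) = dist q' (v' i)) :
    dist p q = dist p' q' :=
  le_antisymm
    (dist_le_dist_of_wOppSide_of_congruent hv.symm hpq' (fun i ↦ (hp i).symm) fun i ↦ (hq i).symm)
    (dist_le_dist_of_wOppSide_of_congruent hv hpq hp hq)

end

/-- Two tetrahedra-pairs attached along congruent nondegenerate triangles, with the
apices `p, q` (resp. `p', q'`) strictly on opposite sides of the triangle's plane and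
with equal corresponding edge lengths, have equal diagonals: `dist p q = dist p' q'`. -/
theorem stmt_7 (a b c p q a' b' c' p' q' : EuclideanSpace ℝ (Fin 3))
    (habc : AffineIndependent ℝ ![a, b, c])
    (habc' : AffineIndependent ℝ ![a', b', c'])
    (hpq : (affineSpan ℝ ({a, b, c} : Set (EuclideanSpace ℝ (Fin 3)))).SOppSide p q)
    (hpq' : (affineSpan ℝ ({a', b', c'} : Set (EuclideanSpace ℝ (Fin 3)))).SOppSide p' q')
    (hab : dist a b = dist a' b') (hbc : dist b c = dist b' c') (hac : dist a c = dist a' c')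
    (hpa : dist p a = dist p' a') (hpb : dist p b = dist p' b') (hpc : dist p c = dist p' c')
    (hqa : dist q a = dist q' a') (hqb : dist q b = dist q' b') (hqc : dist q c = dist q' c') :
    dist p q = dist p' q' := by
  have range_triple (x y z : EuclideanSpace ℝ (Fin 3)) : Set.range ![x, y, z] = {x, y, z} := by
    simp only [Matrix.range_cons, Matrix.range_empty, Set.union_empty, Set.singleton_union]
  rw [← range_triple] at hpq hpq'
  exact stmt_7_general
    (EuclideanGeometry.side_side_side hab hbc (by rwa [dist_comm c, dist_comm c']))
    hpq.wOppSide hpq'.wOppSide (by simp [Fin.forall_fin_succ, hpa, hpb, hpc])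
    (by simp [Fin.forall_fin_succ, hqa, hqb, hqc])
end

section
/- Let r, ℓ, m be reals with 0 < ℓ < 2r and 0 < m < 2r, and let O be any point of the Euclidean plane ℝ². Then there exist four points a, b, c, d with dist(O, a) = dist(O, b) = dist(O, c) = dist(O, d) = r, dist(a, b) = ℓ, dist(b, c) = m, dist(c, d) = ℓ, and dist(d, a) = m. -/
/-!
Starting anywhere on the circle, one can walk along it by a chord of any length between `0` and the
diameter: the distance from `a` is continuous on the (connected) circle, vanishes at `a` and equals
`2 * r` at the antipode of `a`. Two such steps give `a`, `b`, `c` with `dist a b = ℓ` and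
`dist b c = m`. The reflection in the perpendicular bisector of `a` and `c` swaps these two points
and fixes `O`, so the mirror image `d` of `b` lies on the circle and closes up the quadrilateral.
-/

open Metric Set AffineSubspace
open EuclideanGeometry (reflection reflection_reflection reflection_orthogonal_vadd dist_reflection
  dist_reflection_eq_of_mem)

section NormedSpace

variable {V P : Type*} [NormedAddCommGroup V] [NormedSpace ℝ V] [PseudoMetricSpace P]
  [NormedAddTorsor V P]

theorem isPreconnected_sphere_of_torsor (hV : 1 < Module.rank ℝ V) (O : P) (r : ℝ) :
    IsPreconnected (sphere O r) := by
  have h_image : IsometryEquiv.vaddConst O '' sphere (0 : V) r = sphere O r := by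
    rw [IsometryEquiv.image_sphere, IsometryEquiv.vaddConst_apply, zero_vadd]
  rw [← h_image]
  exact (isPreconnected_sphere hV 0 r).image _ (IsometryEquiv.vaddConst O).continuous.continuousOn

theorem exists_mem_sphere_dist_eq (hV : 1 < Module.rank ℝ V) {O a : P} {r ℓ : ℝ}
    (ha : a ∈ sphere O r) (hℓ : ℓ ∈ Icc 0 (2 * r)) : ∃ b ∈ sphere O r, dist a b = ℓ := by
  let antipode := Equiv.pointReflection O a
  have h_antipode : antipode ∈ sphere O r := by
    rw [mem_sphere, dist_pointReflection_left, dist_comm, ha]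
  have h_diameter : dist a antipode = 2 * r := by
    rw [dist_right_pointReflection ℝ, Real.norm_two, dist_comm, ha]
  have h_chords : Icc (dist a a) (dist a antipode) ⊆ dist a '' sphere O r :=
    (isPreconnected_sphere_of_torsor hV O r).intermediate_value ha h_antipode
      (continuous_const.dist continuous_id).continuousOn
  rw [dist_self, h_diameter] at h_chords
  exact h_chords hℓ

end NormedSpace

section InnerProductSpace

variable {V P : Type*} [NormedAddCommGroup V] [InnerProductSpace ℝ V] [MetricSpace P]
  [NormedAddTorsor V P]

instance nonempty_perpBisector (a c : P) : Nonempty (perpBisector a c) :=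
  perpBisector_nonempty.to_subtype

instance hasOrthogonalProjection_direction_perpBisector (a c : P) :
    (perpBisector a c).direction.HasOrthogonalProjection := by
  rw [direction_perpBisector]
  infer_instance

theorem reflection_perpBisector_left (a c : P) : reflection (perpBisector a c) a = c := by
  have h_orthogonal : a -ᵥ midpoint ℝ a c ∈ (perpBisector a c).directionᗮ := by
    rw [direction_perpBisector, Submodule.orthogonal_orthogonal, left_vsub_midpoint,
      ← neg_vsub_eq_vsub_rev c a, smul_neg]
    exact neg_mem (Submodule.smul_mem _ _ (Submodule.mem_span_singleton_self _))
  calc reflection (perpBisector a c) a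
      = reflection (perpBisector a c) ((a -ᵥ midpoint ℝ a c) +ᵥ midpoint ℝ a c) := by
        rw [vsub_vadd]
    _ = -(a -ᵥ midpoint ℝ a c) +ᵥ midpoint ℝ a c :=
        reflection_orthogonal_vadd (midpoint_mem_perpBisector a c) h_orthogonal
    _ = (c -ᵥ midpoint ℝ a c) +ᵥ midpoint ℝ a c := by
        rw [neg_vsub_eq_vsub_rev, midpoint_vsub_left, right_vsub_midpoint]
    _ = c := vsub_vadd c _

theorem reflection_perpBisector_right (a c : P) : reflection (perpBisector a c) c = a := by
  simpa only [reflection_perpBisector_left] using reflection_reflection (perpBisector a c) a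

theorem stmt_11_general (hV : 1 < Module.rank ℝ V) {O a : P} {r ℓ m : ℝ} (ha : a ∈ sphere O r)
    (hℓ : ℓ ∈ Icc 0 (2 * r)) (hm : m ∈ Icc 0 (2 * r)) :
    ∃ b ∈ sphere O r, ∃ c ∈ sphere O r, ∃ d ∈ sphere O r,
      dist a b = ℓ ∧ dist b c = m ∧ dist c d = ℓ ∧ dist d a = m := by
  obtain ⟨b, hb, hab⟩ := exists_mem_sphere_dist_eq hV ha hℓ
  obtain ⟨c, hc, hbc⟩ := exists_mem_sphere_dist_eq hV hb hm
  have hO : O ∈ perpBisector a c :=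
    mem_perpBisector_iff_dist_eq.2 ((mem_sphere'.1 ha).trans (mem_sphere'.1 hc).symm)
  refine ⟨b, hb, c, hc, reflection (perpBisector a c) b, ?_, hab, hbc, ?_, ?_⟩
  · rw [mem_sphere', dist_reflection_eq_of_mem _ hO, ← mem_sphere']
    exact hb
  · rw [dist_reflection, reflection_perpBisector_right, hab]
  · rw [← dist_reflection, reflection_perpBisector_left, hbc]

end InnerProductSpace

/-- For any reals `0 < ℓ < 2r`, `0 < m < 2r` and any point `O` of the Euclidean plane,
there is a quadrilateral `a b c d` inscribed in the circle of radius `r` centered at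
`O` whose consecutive sides have lengths `ℓ, m, ℓ, m`. -/
theorem stmt_11 (r ℓ m : ℝ) (hℓ₁ : 0 < ℓ) (hℓ₂ : ℓ < 2 * r)
    (hm₁ : 0 < m) (hm₂ : m < 2 * r) (O : EuclideanSpace ℝ (Fin 2)) :
    ∃ a b c d : EuclideanSpace ℝ (Fin 2),
      dist O a = r ∧ dist O b = r ∧ dist O c = r ∧ dist O d = r ∧
      dist a b = ℓ ∧ dist b c = m ∧ dist c d = ℓ ∧ dist d a = m := by
  have h_rank : 1 < Module.rank ℝ (EuclideanSpace ℝ (Fin 2)) :=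
    Module.one_lt_rank_of_one_lt_finrank (by simp)
  obtain ⟨a, ha⟩ : (sphere O r).Nonempty := NormedSpace.sphere_nonempty.2 (by linarith)
  obtain ⟨b, hb, c, hc, d, hd, h_sides⟩ :=
    stmt_11_general h_rank ha ⟨hℓ₁.le, hℓ₂.le⟩ ⟨hm₁.le, hm₂.le⟩
  rw [mem_sphere'] at ha hb hc hd
  exact ⟨a, b, c, d, ha, hb, hc, hd, h_sides⟩
end

section
/- Let ℓ, m, s, t be reals with 0 < ℓ < 2s, 0 < m < 2s, and s < t. Then there exist ε ∈ (0, s) and continuous maps a, b, c, d, p, q from the interval (s − ε, s] to Euclidean 3-space ℝ³ such that for every r ∈ (s − ε, s]: (i) dist(p(r), x(r)) = s and dist(q(r), x(r)) = t for each x ∈ {a, b, c, d}; (ii) dist(a(r), b(r)) = ℓ, dist(b(r), c(r)) = m, dist(c(r), d(r)) = ℓ, and dist(d(r), a(r)) = m; (iii) each of the eight triples (a(r), b(r), p(r)), (b(r), c(r), p(r)), (c(r), d(r), p(r)), (d(r), a(r), p(r)), (a(r), b(r), q(r)), (b(r), c(r), q(r)), (c(r), d(r), q(r)), (d(r), a(r),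 q(r)) is affinely independent; and (iv) the function r ↦ dist(a(r), c(r)) is injective on (s − ε, s]. In particular, all twelve edge lengths of the configuration are constant in r while the configuration changes shape, so the Bricard octahedron of type 2 with these edge lengths is flexible. -/
/-!
The base `abcd` lies on a horizontal circle of radius `r`. If `α` and `β` are the half central
angles of its chords of lengths `ℓ` and `m`, put `a`, `b`, `c`, `d` at the polar angles
`0`, `2α`, `2(α + β)`, `2β`; then `ab` and `dc` are chords of length `ℓ` and `bc` and `ad` are
chords of length `m`. The apices on the axis have heights `√(s² - r²)` and `-√(t² - r²)`. All
edge lengths are thus independent of `r`, whereas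
`|ac| = 2 r sin (α + β) = ℓ cos β + m cos α` is strictly increasing in `r`, because `α` and `β`
decrease.
-/

open Real

section Faces

variable {V P : Type*} [SeminormedAddCommGroup V] [NormedSpace ℝ V] [PseudoMetricSpace P]
  [NormedAddTorsor V P] {x y z : P}

lemma affineIndependent_of_strict_triangle_inequalities (hxy : dist x y < dist x z + dist z y)
    (hyz : dist y z < dist y x + dist x z) (hzx : dist z x < dist z y + dist y x) :
    AffineIndependent ℝ ![x, y, z] := by
  rw [affineIndependent_iff_not_collinear_set]
  intro h
  rcases h.wbtw_or_wbtw_or_wbtw with h | h | h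
  · exact hzx.ne' ((add_comm _ _).trans (by simpa only [dist_comm] using h.dist_add_dist))
  · exact hxy.ne' ((add_comm _ _).trans (by simpa only [dist_comm] using h.dist_add_dist))
  · exact hyz.ne' ((add_comm _ _).trans (by simpa only [dist_comm] using h.dist_add_dist))

lemma affineIndependent_of_isosceles {L R : ℝ} (hL : 0 < L) (hLR : L < 2 * R)
    (hxy : dist x y = L) (hzx : dist z x = R) (hzy : dist z y = R) :
    AffineIndependent ℝ ![x, y, z] := by
  apply affineIndependent_of_strict_triangle_inequalities <;>
    simp only [dist_comm x z, dist_comm y z, dist_comm y x, hxy, hzx, hzy] <;> linarith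

lemma affineIndependent_lateral_faces_of_pyramid {v : Fin 4 → P} {ℓ m R : ℝ} (hℓ : 0 < ℓ)
    (hm : 0 < m) (hℓR : ℓ < 2 * R) (hmR : m < 2 * R) (h₀₁ : dist (v 0) (v 1) = ℓ)
    (h₁₂ : dist (v 1) (v 2) = m) (h₂₃ : dist (v 2) (v 3) = ℓ) (h₃₀ : dist (v 3) (v 0) = m)
    (hz : ∀ i, dist z (v i) = R) :
    AffineIndependent ℝ ![v 0, v 1, z] ∧ AffineIndependent ℝ ![v 1, v 2, z] ∧
      AffineIndependent ℝ ![v 2, v 3, z] ∧ AffineIndependent ℝ ![v 3, v 0, z] :=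
  ⟨affineIndependent_of_isosceles hℓ hℓR h₀₁ (hz 0) (hz 1),
    affineIndependent_of_isosceles hm hmR h₁₂ (hz 1) (hz 2),
    affineIndependent_of_isosceles hℓ hℓR h₂₃ (hz 2) (hz 3),
    affineIndependent_of_isosceles hm hmR h₃₀ (hz 3) (hz 0)⟩

end Faces

/-- The point of Euclidean 3-space with cylindrical coordinates `(r, θ, z)`. -/
noncomputable def cylindricalPoint (r θ z : ℝ) : EuclideanSpace ℝ (Fin 3) :=
  !₂[r * cos θ, r * sin θ, z]

lemma continuousOn_cylindricalPoint {X : Type*} [TopologicalSpace X] {r θ z : X → ℝ} {S : Set X}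
    (hr : ContinuousOn r S) (hθ : ContinuousOn θ S) (hz : ContinuousOn z S) :
    ContinuousOn (fun x => cylindricalPoint (r x) (θ x) (z x)) S := by
  refine (PiLp.continuous_toLp 2 _).comp_continuousOn (continuousOn_pi.2 fun i => ?_)
  fin_cases i
  · exact hr.mul (continuous_cos.comp_continuousOn hθ)
  · exact hr.mul (continuous_sin.comp_continuousOn hθ)
  · exact hz

lemma dist_sq_cylindricalPoint (r θ z r' θ' z' : ℝ) :
    dist (cylindricalPoint r θ z) (cylindricalPoint r' θ' z') ^ 2 =
      r ^ 2 + r' ^ 2 - 2 * r * r' * cos (θ - θ') + (z - z') ^ 2 := by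
  simp only [EuclideanSpace.dist_sq_eq, Fin.sum_univ_three, Real.dist_eq, sq_abs,
    cylindricalPoint, Matrix.cons_val]
  rw [cos_sub]
  linear_combination r ^ 2 * sin_sq_add_cos_sq θ + r' ^ 2 * sin_sq_add_cos_sq θ'

lemma dist_cylindricalPoint_add_two_mul (r θ φ z : ℝ) :
    dist (cylindricalPoint r θ z) (cylindricalPoint r (θ + 2 * φ) z) = |2 * r * sin φ| := by
  rw [← abs_dist, ← sq_eq_sq_iff_abs_eq_abs, dist_sq_cylindricalPoint, sub_add_cancel_left,
    cos_neg, cos_two_mul, cos_sq']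
  ring

lemma dist_axis_cylindricalPoint {r h R : ℝ} (hR : 0 ≤ R) (hh : h ^ 2 = R ^ 2 - r ^ 2) (φ θ : ℝ) :
    dist (cylindricalPoint 0 φ h) (cylindricalPoint r θ 0) = R := by
  rw [← sq_eq_sq₀ dist_nonneg hR, dist_sq_cylindricalPoint]
  linear_combination hh

/-- Half the central angle subtended by a chord of length `L` in a circle of radius `r`,
meaningful for `0 < r` and `0 ≤ L ≤ 2 * r`. -/
noncomputable def halfCentralAngle (L r : ℝ) : ℝ := arcsin (L / (2 * r))

section Chord

variable {L ℓ m r : ℝ}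

lemma continuousOn_halfCentralAngle (L : ℝ) : ContinuousOn (halfCentralAngle L) {0}ᶜ :=
  continuous_arcsin.comp_continuousOn <| continuousOn_const.div (by fun_prop)
    fun _ hr => mul_ne_zero two_ne_zero hr

lemma two_mul_radius_mul_sin_halfCentralAngle (hL : 0 ≤ L) (hLr : L ≤ 2 * r) :
    2 * r * sin (halfCentralAngle L r) = L := by
  have h_ratio : 0 ≤ L / (2 * r) := div_nonneg hL (hL.trans hLr)
  rw [halfCentralAngle, sin_arcsin (by linarith) (div_le_one_of_le₀ hLr (hL.trans hLr)),
    mul_div_cancel_of_imp']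
  intro h_diam
  linarith

lemma cos_halfCentralAngle_nonneg (L r : ℝ) : 0 ≤ cos (halfCentralAngle L r) :=
  cos_arcsin_nonneg _

lemma strictMonoOn_cos_halfCentralAngle (hL : 0 < L) :
    StrictMonoOn (fun r => cos (halfCentralAngle L r)) (Set.Ici (L / 2)) := by
  intro r hr r' hr' hlt
  rw [Set.mem_Ici] at hr hr'
  have hr₀ : 0 < r := by linarith
  have hr'₀ : 0 < r' := by linarith
  have h_ratio' : 0 < L / (2 * r') := by positivity
  have h_ratio : L / (2 * r) ≤ 1 := div_le_one_of_le₀ (by linarith) (by positivity)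
  have h_ratio_lt : L / (2 * r') < L / (2 * r) := by gcongr
  exact cos_lt_cos_of_nonneg_of_le_pi_div_two (arcsin_nonneg.2 h_ratio'.le)
    (arcsin_le_pi_div_two _) (arcsin_lt_arcsin (by linarith) h_ratio_lt h_ratio)

lemma dist_chord {θ φ : ℝ} (hL : 0 ≤ L) (hLr : L ≤ 2 * r)
    (hφ : φ = θ + 2 * halfCentralAngle L r) (z : ℝ) :
    dist (cylindricalPoint r θ z) (cylindricalPoint r φ z) = L := by
  rw [hφ, dist_cylindricalPoint_add_two_mul, two_mul_radius_mul_sin_halfCentralAngle hL hLr,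
    abs_of_nonneg hL]

lemma dist_consecutive_chords (hℓ : 0 ≤ ℓ) (hm : 0 ≤ m) (hℓr : ℓ ≤ 2 * r) (hmr : m ≤ 2 * r)
    (θ z : ℝ) :
    dist (cylindricalPoint r θ z)
        (cylindricalPoint r (θ + 2 * (halfCentralAngle ℓ r + halfCentralAngle m r)) z) =
      ℓ * cos (halfCentralAngle m r) + m * cos (halfCentralAngle ℓ r) := by
  have h_sum : 2 * r * sin (halfCentralAngle ℓ r + halfCentralAngle m r) =
      ℓ * cos (halfCentralAngle m r) + m * cos (halfCentralAngle ℓ r) := by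
    rw [sin_add]
    linear_combination
      cos (halfCentralAngle m r) * two_mul_radius_mul_sin_halfCentralAngle hℓ hℓr +
        cos (halfCentralAngle ℓ r) * two_mul_radius_mul_sin_halfCentralAngle hm hmr
  rw [dist_cylindricalPoint_add_two_mul, h_sum, abs_of_nonneg]
  exact add_nonneg (mul_nonneg hℓ (cos_halfCentralAngle_nonneg m r))
    (mul_nonneg hm (cos_halfCentralAngle_nonneg ℓ r))

end Chord

/-- The vertices `a`, `b`, `c`, `d` of the base of the octahedron, indexed by `Fin 4`, on the
horizontal circle of radius `r` centred at the origin. The side lengths alternate between `ℓ` and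
`m` provided `ℓ` and `m` lie in `[0, 2 * r]`. -/
noncomputable def bricardBase (ℓ m r : ℝ) (i : Fin 4) : EuclideanSpace ℝ (Fin 3) :=
  cylindricalPoint r
    (![0, 2 * halfCentralAngle ℓ r, 2 * (halfCentralAngle ℓ r + halfCentralAngle m r),
      2 * halfCentralAngle m r] i) 0

/-- The point on the axis of the circle carrying `bricardBase` at distance `R` from all points of
that circle, above its plane for `σ = 1` and below it for `σ = -1`; this requires `|r| ≤ R`. -/
noncomputable def bricardApex (σ R r : ℝ) : EuclideanSpace ℝ (Fin 3) :=
  cylindricalPoint 0 0 (σ * √(R ^ 2 - r ^ 2))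

section Octahedron

variable {ℓ m r : ℝ}

lemma continuousOn_bricardBase (ℓ m : ℝ) (i : Fin 4) :
    ContinuousOn (fun r => bricardBase ℓ m r i) {0}ᶜ := by
  have hα := continuousOn_halfCentralAngle ℓ
  have hβ := continuousOn_halfCentralAngle m
  refine continuousOn_cylindricalPoint continuousOn_id ?_ continuousOn_const
  fin_cases i <;> dsimp <;> fun_prop

lemma continuous_bricardApex (σ R : ℝ) : Continuous (bricardApex σ R) :=
  continuousOn_univ.1 <|
    continuousOn_cylindricalPoint (by fun_prop) (by fun_prop) (by fun_prop)

lemma dist_bricardBase_edges (hℓ : 0 ≤ ℓ) (hm : 0 ≤ m) (hℓr : ℓ ≤ 2 * r) (hmr : m ≤ 2 * r) :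
    dist (bricardBase ℓ m r 0) (bricardBase ℓ m r 1) = ℓ ∧
    dist (bricardBase ℓ m r 1) (bricardBase ℓ m r 2) = m ∧
    dist (bricardBase ℓ m r 2) (bricardBase ℓ m r 3) = ℓ ∧
    dist (bricardBase ℓ m r 3) (bricardBase ℓ m r 0) = m := by
  rw [dist_comm (bricardBase ℓ m r 3), dist_comm (bricardBase ℓ m r 2)]
  refine ⟨dist_chord hℓ hℓr ?_ 0, dist_chord hm hmr ?_ 0, dist_chord hℓ hℓr ?_ 0,
    dist_chord hm hmr ?_ 0⟩ <;> simp only [Matrix.cons_val] <;> ring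

lemma dist_bricardApex_bricardBase {σ R : ℝ} (hσ : σ ^ 2 = 1) (hrR : |r| ≤ R) (ℓ m : ℝ)
    (i : Fin 4) : dist (bricardApex σ R r) (bricardBase ℓ m r i) = R := by
  have h_sq : r ^ 2 ≤ R ^ 2 := sq_le_sq' (abs_le.1 hrR).1 (abs_le.1 hrR).2
  refine dist_axis_cylindricalPoint ((abs_nonneg r).trans hrR) ?_ _ _
  rw [mul_pow, hσ, one_mul, sq_sqrt (sub_nonneg.2 h_sq)]

lemma strictMonoOn_dist_bricardBase_diagonal (hℓ : 0 < ℓ) (hm : 0 < m) :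
    StrictMonoOn (fun r => dist (bricardBase ℓ m r 0) (bricardBase ℓ m r 2))
      (Set.Ici (max ℓ m / 2)) := by
  have h_cos {L : ℝ} (hL : 0 < L) (h_le : L ≤ max ℓ m) :
      StrictMonoOn (fun r => cos (halfCentralAngle L r)) (Set.Ici (max ℓ m / 2)) :=
    (strictMonoOn_cos_halfCentralAngle hL).mono (Set.Ici_subset_Ici.2 (by linarith))
  have h_sum : StrictMonoOn
      (fun r => ℓ * cos (halfCentralAngle m r) + m * cos (halfCentralAngle ℓ r))
      (Set.Ici (max ℓ m / 2)) :=
    ((strictMono_mul_left_of_pos hℓ).comp_strictMonoOn (h_cos hm (le_max_right ℓ m))).add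
      ((strictMono_mul_left_of_pos hm).comp_strictMonoOn (h_cos hℓ (le_max_left ℓ m)))
  refine h_sum.congr fun r hr => ?_
  obtain ⟨hℓr, hmr⟩ := max_le_iff.1 ((div_le_iff₀' two_pos).1 (Set.mem_Ici.1 hr))
  simpa [bricardBase] using (dist_consecutive_chords hℓ.le hm.le hℓr hmr 0 0).symm

end Octahedron

/-- Flexibility of the Bricard octahedron of type 2: for side lengths `0 < ℓ < 2s`,
`0 < m < 2s` and `s < t`, there are `ε ∈ (0, s)` and continuous families
`a, b, c, d, p, q : (s − ε, s] → ℝ³` such that for every `r` in this interval all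
twelve edge lengths of the octahedron with vertices `a r, b r, c r, d r, p r, q r`
are the prescribed constants, all eight faces are nondegenerate triangles, while the
diagonal length `dist (a r) (c r)` varies injectively with `r`. -/
theorem stmt_12 (ℓ m s t : ℝ) (hℓ₁ : 0 < ℓ) (hℓ₂ : ℓ < 2 * s)
    (hm₁ : 0 < m) (hm₂ : m < 2 * s) (hst : s < t) :
    ∃ ε : ℝ, 0 < ε ∧ ε < s ∧
    ∃ a b c d p q : ℝ → EuclideanSpace ℝ (Fin 3),
      ContinuousOn a (Set.Ioc (s - ε) s) ∧
      ContinuousOn b (Set.Ioc (s - ε) s) ∧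
      ContinuousOn c (Set.Ioc (s - ε) s) ∧
      ContinuousOn d (Set.Ioc (s - ε) s) ∧
      ContinuousOn p (Set.Ioc (s - ε) s) ∧
      ContinuousOn q (Set.Ioc (s - ε) s) ∧
      (∀ r ∈ Set.Ioc (s - ε) s,
        dist (p r) (a r) = s ∧ dist (p r) (b r) = s ∧
        dist (p r) (c r) = s ∧ dist (p r) (d r) = s ∧
        dist (q r) (a r) = t ∧ dist (q r) (b r) = t ∧
        dist (q r) (c r) = t ∧ dist (q r) (d r) = t ∧
        dist (a r) (b r) = ℓ ∧ dist (b r) (c r) = m ∧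
        dist (c r) (d r) = ℓ ∧ dist (d r) (a r) = m ∧
        AffineIndependent ℝ ![a r, b r, p r] ∧
        AffineIndependent ℝ ![b r, c r, p r] ∧
        AffineIndependent ℝ ![c r, d r, p r] ∧
        AffineIndependent ℝ ![d r, a r, p r] ∧
        AffineIndependent ℝ ![a r, b r, q r] ∧
        AffineIndependent ℝ ![b r, c r, q r] ∧
        AffineIndependent ℝ ![c r, d r, q r] ∧
        AffineIndependent ℝ ![d r, a r, q r]) ∧
      Set.InjOn (fun r => dist (a r) (c r)) (Set.Ioc (s - ε) s) := by
  have h_max : max ℓ m < 2 * s := max_lt hℓ₂ hm₂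
  have h_max_pos : 0 < max ℓ m := lt_max_of_lt_left hℓ₁
  refine ⟨s - max ℓ m / 2, by linarith, by linarith, ?_⟩
  rw [sub_sub_cancel]
  have h_base (i : Fin 4) : ContinuousOn (bricardBase ℓ m · i) (Set.Ioc (max ℓ m / 2) s) :=
    (continuousOn_bricardBase ℓ m i).mono fun r hr => ((half_pos h_max_pos).trans hr.1).ne'
  refine ⟨(bricardBase ℓ m · 0), (bricardBase ℓ m · 1), (bricardBase ℓ m · 2),
    (bricardBase ℓ m · 3), bricardApex 1 s, bricardApex (-1) t, h_base 0, h_base 1, h_base 2,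
    h_base 3, (continuous_bricardApex 1 s).continuousOn,
    (continuous_bricardApex (-1) t).continuousOn,
    fun r hr => ?_, ((strictMonoOn_dist_bricardBase_diagonal hℓ₁ hm₁).mono
      (Set.Ioc_subset_Ioi_self.trans Set.Ioi_subset_Ici_self)).injOn⟩
  have hrs : |r| ≤ s := abs_le.2 ⟨by linarith [hr.1], hr.2⟩
  obtain ⟨hℓr, hmr⟩ := max_lt_iff.1 ((div_lt_iff₀' two_pos).1 hr.1)
  obtain ⟨hab, hbc, hcd, hda⟩ := dist_bricardBase_edges hℓ₁.le hm₁.le hℓr.le hmr.le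
  have hp := dist_bricardApex_bricardBase (one_pow 2) hrs ℓ m
  have hq := dist_bricardApex_bricardBase neg_one_sq (hrs.trans hst.le) ℓ m
  obtain ⟨habp, hbcp, hcdp, hdap⟩ := affineIndependent_lateral_faces_of_pyramid
    hℓ₁ hm₁ hℓ₂ hm₂ hab hbc hcd hda hp
  have h_faces_q := affineIndependent_lateral_faces_of_pyramid
    hℓ₁ hm₁ (by linarith) (by linarith) hab hbc hcd hda hq
  exact ⟨hp 0, hp 1, hp 2, hp 3, hq 0, hq 1, hq 2, hq 3, hab, hbc, hcd, hda,
    habp, hbcp, hcdp, hdap, h_faces_q⟩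
end
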